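/- arXiv:2310.07207 — 7 statements merged into one kernel-verified Lean document; each statement's English description precedes it below -/
import Mathlib

section
/- Self-consistency condition for the protagonist safety value function (Theorem 1, eq. (14)): for every feedback policy π : S → U and every state x ∈ S, V^π(x) = min{ h(x), min_{a∈A} V^π(f(x, π(x), a)) }. -/
/-- Closed-loop trajectory: `traj f π μ x t` is the state at time `t` starting from `x`. -/
def traj {S U A : Type*} (f : S → U → A → S) (π : S → U) (μ : S → A) (x : S) : ℕ → S
  | 0 => x
  | t + 1 =>
    let y := traj f π μ x t
    f y (π y) (μ y)

/-- Safety value function for a protagonist policy `π` and an adversary policy `μ`. -/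
noncomputable def Vpm {S U A : Type*} (f : S → U → A → S) (h : S → ℝ)
    (π : S → U) (μ : S → A) (x : S) : ℝ :=
  ⨅ t : ℕ, h (traj f π μ x t)

/-- Safety value function for a protagonist policy `π` (worst-case adversary). -/
noncomputable def Vp {S U A : Type*} (f : S → U → A → S) (h : S → ℝ)
    (π : S → U) (x : S) : ℝ :=
  ⨅ μ : S → A, Vpm f h π μ x

/-- Optimal safety value function. -/
noncomputable def Vstar {S U A : Type*} (f : S → U → A → S) (h : S → ℝ) (x : S) : ℝ :=
  ⨆ π : S → U, Vp f h π x

theorem traj_shift {S U A : Type*} (f : S → U → A → S) (π : S → U) (μ : S → A) (x : S) (t : ℕ) :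
    traj f π μ x (t + 1) = traj f π μ (f x (π x) (μ x)) t := by
  induction t with
  | zero => rfl
  | succ t ih =>
    rw [traj, ih]
    rfl

/-- `z` is reachable from the state in exactly `n` steps. -/
def reachN {S U A : Type*} (f : S → U → A → S) (π : S → U) (z : S) : ℕ → S → Prop
  | 0, y => y = z
  | n + 1, y => ∃ a, reachN f π z n (f y (π y) a)

theorem reachN_traj {S U A : Type*} (f : S → U → A → S) (π : S → U) (μ : S → A) (t : ℕ) :
    ∀ x, reachN f π (traj f π μ x t) t x := by
  induction t with
  | zero => intro x; rfl
  | succ t ih =>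
    intro x
    rw [traj_shift]
    exact ⟨μ x, ih _⟩

theorem exists_policy {S U A : Type*} [Nonempty A] (f : S → U → A → S) (π : S → U) (z : S) :
    ∃ μ : S → A, ∀ n y, reachN f π z n y → ∃ t, traj f π μ y t = z := by
  classical
  have key : ∀ y, ∃ a, ∀ n, reachN f π z (n + 1) y → ∃ m ≤ n, reachN f π z m (f y (π y) a) := by
    intro y
    by_cases hy : ∃ n, reachN f π z (n + 1) y
    · obtain ⟨a, ha⟩ := Nat.find_spec hy
      exact ⟨a, fun n hn => ⟨Nat.find hy, Nat.find_min' hy hn, ha⟩⟩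
    · exact ⟨Classical.arbitrary A, fun n hn => (hy ⟨n, hn⟩).elim⟩
  choose μ hμ using key
  refine ⟨μ, fun n => ?_⟩
  induction n using Nat.strong_induction_on with
  | _ n ih =>
    intro y hy
    cases n with
    | zero => exact ⟨0, hy⟩
    | succ n =>
      obtain ⟨m, hm, hr⟩ := hμ y n hy
      obtain ⟨t, ht⟩ := ih m (by omega) _ hr
      exact ⟨t + 1, by rw [traj_shift, ht]⟩

theorem Vp_le {S U A : Type*} [Finite S] [Finite A] (f : S → U → A → S) (h : S → ℝ)
    (π : S → U) (μ : S → A) (x : S) (t : ℕ) : Vp f h π x ≤ h (traj f π μ x t) := by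
  have h1 : Vp f h π x ≤ Vpm f h π μ x := ciInf_le (Set.finite_range _).bddBelow μ
  refine h1.trans (ciInf_le (f := fun t => h (traj f π μ x t)) ?_ t)
  refine (Set.finite_range h).bddBelow.mono ?_
  rintro _ ⟨t, rfl⟩
  exact ⟨_, rfl⟩

theorem self_consistency_protagonist {S U A : Type*} [Fintype S] [Nonempty S] [Fintype U] [Nonempty U] [Fintype A] [Nonempty A]
    (f : S → U → A → S) (h : S → ℝ)
    (π : S → U) (x : S) :
    Vp f h π x = min (h x) (⨅ a : A, Vp f h π (f x (π x) a)) := by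
  apply le_antisymm
  · refine le_min (Vp_le f h π (Classical.arbitrary _) x 0) ?_
    refine le_ciInf fun a => le_ciInf fun μ => le_ciInf fun t => ?_
    have hr : reachN f π (traj f π μ (f x (π x) a) t) (t + 1) x := ⟨a, reachN_traj f π μ t _⟩
    obtain ⟨ν, hν⟩ := exists_policy f π (traj f π μ (f x (π x) a) t)
    obtain ⟨s, hs⟩ := hν _ _ hr
    rw [← hs]
    exact Vp_le f h π ν x s
  · refine le_ciInf fun μ => le_ciInf fun t => ?_
    cases t with
    | zero => exact min_le_left _ _
    | succ t =>
      rw [traj_shift]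
      refine (min_le_right _ _).trans ?_
      refine (ciInf_le (Set.finite_range _).bddBelow (μ x)).trans ?_
      exact Vp_le f h π μ _ t
end

section
/- Self-consistency condition for the optimal safety value function (Theorem 1, eq. (15)): for every state x ∈ S, V*(x) = min{ h(x), max_{u∈U} min_{a∈A} V*(f(x, u, a)) }. -/
lemma aux_le_iSup {ι : Type*} [Finite ι] [Nonempty ι] (g : ι → ℝ) (c : ℝ) :
    c ≤ (⨆ i, g i) ↔ ∃ i, c ≤ g i := by
  constructor
  · intro hc
    obtain ⟨i, hi⟩ := exists_eq_ciSup_of_finite (f := g)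
    exact ⟨i, hi ▸ hc⟩
  · rintro ⟨i, hi⟩
    exact hi.trans (le_ciSup (Set.finite_range g).bddAbove i)

lemma aux_le_iInf {ι : Type*} [Finite ι] [Nonempty ι] (g : ι → ℝ) (c : ℝ) :
    c ≤ (⨅ i, g i) ↔ ∀ i, c ≤ g i :=
  le_ciInf_iff (Set.finite_range g).bddBelow

lemma aux_le_Vp {S U A : Type*} [Finite S] [Finite A] [Nonempty A]
    (f : S → U → A → S) (h : S → ℝ) (π : S → U) (x : S) (c : ℝ) :
    c ≤ Vp f h π x ↔ ∀ μ t, c ≤ h (traj f π μ x t) := by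
  unfold Vp
  rw [aux_le_iInf]
  refine forall_congr' fun μ => ?_
  unfold Vpm
  exact le_ciInf_iff (((Set.finite_range h).subset (by
    rintro _ ⟨t, rfl⟩; exact ⟨_, rfl⟩)).bddBelow)

lemma aux_le_Vstar {S U A : Type*} [Finite S] [Finite U] [Nonempty U]
    (f : S → U → A → S) (h : S → ℝ) (x : S) (c : ℝ) :
    c ≤ Vstar f h x ↔ ∃ π, c ≤ Vp f h π x := by
  unfold Vstar
  rw [aux_le_iSup]

lemma aux_traj_add {S U A : Type*} (f : S → U → A → S) (π : S → U) (μ : S → A) (x : S) (s t : ℕ) :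
    traj f π μ x (s + t) = traj f π μ (traj f π μ x s) t := by
  induction t with
  | zero => rfl
  | succ t ih => rw [← add_assoc]; simp only [traj, ih]

lemma aux_step {S U A : Type*} [Finite S] [Finite A] [Nonempty A]
    (f : S → U → A → S) (h : S → ℝ) (π : S → U) (x : S) (c : ℝ)
    (hc : c ≤ Vp f h π x) (a : A) : c ≤ Vp f h π (f x (π x) a) := by
  classical
  rw [aux_le_Vp] at hc ⊢
  intro μ t
  by_cases hv : ∃ s ≤ t, traj f π μ (f x (π x) a) s = x
  · obtain ⟨s, hs, hx⟩ := hv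
    obtain ⟨r, rfl⟩ := Nat.exists_eq_add_of_le hs
    rw [aux_traj_add, hx]
    exact hc μ r
  · push Not at hv
    have key : ∀ s ≤ t, traj f π (Function.update μ x a) x (s + 1)
        = traj f π μ (f x (π x) a) s := by
      intro s
      induction s with
      | zero => intro _; simp [traj]
      | succ s ih =>
        intro hs
        have h1 := ih (by omega)
        have h2 := hv s (by omega)
        rw [traj, h1]
        simp [traj, Function.update_of_ne h2]
    rw [← key t le_rfl]
    exact hc _ _

lemma aux_inv {S U A : Type*} [Finite S] [Finite U] [Nonempty U] [Finite A] [Nonempty A]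
    (f : S → U → A → S) (h : S → ℝ) (c : ℝ) (W : Set S)
    (hW : ∀ y ∈ W, c ≤ h y) (hu : ∀ y ∈ W, ∃ u, ∀ a, f y u a ∈ W) (x : S) (hx : x ∈ W) :
    c ≤ Vstar f h x := by
  have hu' : ∀ y, ∃ u, y ∈ W → ∀ a, f y u a ∈ W := by
    intro y
    by_cases hy : y ∈ W
    · obtain ⟨u, h⟩ := hu y hy
      exact ⟨u, fun _ => h⟩
    · exact ⟨Classical.arbitrary U, fun h => absurd h hy⟩
  choose π hπ using hu'
  rw [aux_le_Vstar]
  refine ⟨π, ?_⟩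
  rw [aux_le_Vp]
  intro μ t
  apply hW
  induction t with
  | zero => exact hx
  | succ t ih => exact hπ _ ih _

theorem self_consistency_optimal {S U A : Type*} [Fintype S] [Nonempty S] [Fintype U] [Nonempty U] [Fintype A] [Nonempty A]
    (f : S → U → A → S) (h : S → ℝ) (x : S) :
    Vstar f h x = min (h x) (⨆ u : U, ⨅ a : A, Vstar f h (f x u a)) := by
  have fwd : ∀ c y, c ≤ Vstar f h y → c ≤ h y ∧ ∃ u, ∀ a, c ≤ Vstar f h (f y u a) := by
    intro c y hc
    obtain ⟨π, hπ⟩ := (aux_le_Vstar f h y c).1 hc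
    exact ⟨(aux_le_Vp f h π y c).1 hπ (fun _ => Classical.arbitrary A) 0, π y, fun a =>
      (aux_le_Vstar f h _ c).2 ⟨π, aux_step f h π y c hπ a⟩⟩
  refine eq_of_forall_le_iff fun c => ?_
  rw [le_min_iff, aux_le_iSup]
  simp only [aux_le_iInf]
  refine ⟨fwd c x, ?_⟩
  rintro ⟨h1, u, h2⟩
  refine aux_inv f h c {y | y = x ∨ c ≤ Vstar f h y} ?_ ?_ x (Or.inl rfl)
  · rintro y (rfl | hy)
    · exact h1
    · exact (fwd c y hy).1
  · rintro y (rfl | hy)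
    · exact ⟨u, fun a => Or.inr (h2 a)⟩
    · obtain ⟨v, hv⟩ := (fwd c y hy).2
      exact ⟨v, fun a => Or.inr (hv a)⟩
end

section
/- Contraction property of the optimal safety self-consistency operator (Theorem 2, part 1, for T): for all functions V, W : S → ℝ, ‖T(V) − T(W)‖_∞ ≤ γ · ‖V − W‖_∞. -/
/-- Safety self-consistency operator for fixed protagonist `π` and adversary `μ`. -/
noncomputable def Tpm {S U A : Type*} (γ : ℝ) (f : S → U → A → S) (h : S → ℝ)
    (π : S → U) (μ : S → A) (V : S → ℝ) (x : S) : ℝ :=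
  (1 - γ) * h x + γ * min (h x) (V (f x (π x) (μ x)))

/-- Safety self-consistency operator for fixed protagonist `π` (worst-case adversary). -/
noncomputable def Tp {S U A : Type*} (γ : ℝ) (f : S → U → A → S) (h : S → ℝ)
    (π : S → U) (V : S → ℝ) (x : S) : ℝ :=
  (1 - γ) * h x + γ * min (h x) (⨅ a : A, V (f x (π x) a))

/-- Optimal safety self-consistency operator. -/
noncomputable def Topt {S U A : Type*} (γ : ℝ) (f : S → U → A → S) (h : S → ℝ)
    (V : S → ℝ) (x : S) : ℝ :=
  (1 - γ) * h x + γ * min (h x) (⨆ u : U, ⨅ a : A, V (f x u a))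

theorem aux_sup_inf {S U A : Type*} [Fintype S] [Fintype U] [Nonempty U] [Fintype A] [Nonempty A]
    (g : U → A → S) (V W : S → ℝ) :
    (⨆ u : U, ⨅ a : A, V (g u a)) ≤ (⨆ u : U, ⨅ a : A, W (g u a)) + ⨆ x : S, |V x - W x| := by
  apply ciSup_le
  intro u
  have h1 : (⨅ a : A, W (g u a)) ≤ ⨆ u : U, ⨅ a : A, W (g u a) :=
    le_ciSup (f := fun u => ⨅ a : A, W (g u a)) (Set.finite_range _).bddAbove u
  have h2 : (⨅ a : A, V (g u a)) - (⨆ x : S, |V x - W x|) ≤ ⨅ a : A, W (g u a) := by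
    apply le_ciInf
    intro a
    have h3 : (⨅ a : A, V (g u a)) ≤ V (g u a) :=
      ciInf_le (f := fun a => V (g u a)) (Set.finite_range _).bddBelow a
    have h4 : |V (g u a) - W (g u a)| ≤ ⨆ x : S, |V x - W x| :=
      le_ciSup (f := fun x => |V x - W x|) (Set.finite_range _).bddAbove (g u a)
    have h5 := le_abs_self (V (g u a) - W (g u a))
    linarith
  linarith

theorem contraction_Topt {S U A : Type*} [Fintype S] [Nonempty S] [Fintype U] [Nonempty U] [Fintype A] [Nonempty A]
    (f : S → U → A → S) (h : S → ℝ)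
    {γ : ℝ} (hγ : γ ∈ Set.Ioo (0 : ℝ) 1)
    (V W : S → ℝ) :
    (⨆ x : S, |Topt γ f h V x - Topt γ f h W x|) ≤ γ * ⨆ x : S, |V x - W x| := by
  apply ciSup_le
  intro x
  have h1 := aux_sup_inf (f x) V W
  have h2 := aux_sup_inf (f x) W V
  have e : (⨆ x : S, |W x - V x|) = ⨆ x : S, |V x - W x| := by
    simp only [abs_sub_comm]
  rw [e] at h2
  unfold Topt
  rw [add_sub_add_left_eq_sub, ← mul_sub, abs_mul, abs_of_pos hγ.1]
  apply mul_le_mul_of_nonneg_left _ hγ.1.le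
  have h3 := abs_min_sub_min_le_max (h x) (⨆ u : U, ⨅ a : A, V (f x u a)) (h x)
    (⨆ u : U, ⨅ a : A, W (f x u a))
  refine h3.trans ?_
  have h4 : |(⨆ u : U, ⨅ a : A, V (f x u a)) - (⨆ u : U, ⨅ a : A, W (f x u a))|
      ≤ ⨆ x : S, |V x - W x| := by
    rw [abs_le]; constructor <;> linarith
  refine max_le ?_ h4
  rw [sub_self, abs_zero]
  exact (abs_nonneg _).trans h4
end

section
/- Approximation by the discounted fixed point, joint-policy case (Proposition 1 for T^{π,μ}): fix feedback policies π : S → U and μ : S → A. For every γ ∈ (0,1), the operator T^{π,μ} (with discount γ) has a unique fixed point V_γ : S → ℝ, and for every x ∈ S, V_γ(x) tends to V^{π,μ}(x) as γ tends to 1 from within (0,1). -/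
theorem aux_contract {S U A : Type*} [Fintype S] (f : S → U → A → S) (h : S → ℝ)
    (π : S → U) (μ : S → A) (γ : ℝ) (h0 : 0 < γ) (h1 : γ < 1) :
    ContractingWith ⟨γ, h0.le⟩ (Tpm γ f h π μ) := by
  refine ⟨by exact_mod_cast h1, LipschitzWith.of_dist_le_mul ?_⟩
  intro V W
  show dist _ _ ≤ γ * dist V W
  refine (dist_pi_le_iff (by positivity)).2 fun x => ?_
  have e : dist (Tpm γ f h π μ V x) (Tpm γ f h π μ W x)
      = γ * |min (h x) (V (f x (π x) (μ x))) - min (h x) (W (f x (π x) (μ x)))| := by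
    rw [Real.dist_eq, ← abs_of_pos h0, ← abs_mul, abs_of_pos h0]
    congr 1
    unfold Tpm
    ring
  rw [e]
  refine mul_le_mul_of_nonneg_left ?_ h0.le
  have h3 := dist_le_pi_dist V W (f x (π x) (μ x))
  rw [Real.dist_eq] at h3
  refine le_trans ?_ h3
  have := abs_min_sub_min_le_max (h x) (V (f x (π x) (μ x))) (h x) (W (f x (π x) (μ x)))
  simpa using this

theorem aux_traj {S U A : Type*} (f : S → U → A → S)
    (π : S → U) (μ : S → A) (x : S) (t : ℕ) :
    traj f π μ (f x (π x) (μ x)) t = traj f π μ x (t + 1) := by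
  induction t with
  | zero => rfl
  | succ n ih => rw [traj, ih]; rfl

theorem aux_attain {S U A : Type*} [Fintype S] (f : S → U → A → S) (h : S → ℝ)
    (π : S → U) (μ : S → A) (x : S) :
    (∀ t, Vpm f h π μ x ≤ h (traj f π μ x t)) ∧ ∃ t, Vpm f h π μ x = h (traj f π μ x t) := by
  have hf : (Set.range fun t => h (traj f π μ x t)).Finite :=
    (Set.finite_range h).subset (by rintro _ ⟨t, rfl⟩; exact ⟨_, rfl⟩)
  refine ⟨fun t => ciInf_le hf.bddBelow t, ?_⟩
  obtain ⟨t, ht⟩ := (Set.range_nonempty _).csInf_mem hf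
  exact ⟨t, ht.symm⟩

theorem aux_lower {S U A : Type*} [Fintype S] [Nonempty S] (f : S → U → A → S) (h : S → ℝ)
    (π : S → U) (μ : S → A) (γ : ℝ) (h0 : 0 < γ) (h1 : γ < 1) (V : S → ℝ)
    (hV : Tpm γ f h π μ V = V) (y : S) : Vpm f h π μ y ≤ V y := by
  obtain ⟨x, hx⟩ := Finite.exists_min (fun x => V x - Vpm f h π μ x)
  have hy := hx y
  have hn := hx (f x (π x) (μ x))
  have e := congrFun hV x
  unfold Tpm at e
  have a1 : Vpm f h π μ x ≤ h x := (aux_attain f h π μ x).1 0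
  have a2 : Vpm f h π μ x ≤ Vpm f h π μ (f x (π x) (μ x)) := by
    obtain ⟨t, ht⟩ := (aux_attain f h π μ (f x (π x) (μ x))).2
    rw [ht, aux_traj]
    exact (aux_attain f h π μ x).1 _
  by_contra hc
  push Not at hc
  have a3 : Vpm f h π μ x + (V x - Vpm f h π μ x) ≤ min (h x) (V (f x (π x) (μ x))) :=
    le_min (by linarith) (by linarith)
  have a4 := mul_le_mul_of_nonneg_left a3 h0.le
  nlinarith

theorem aux_upper {S U A : Type*} (f : S → U → A → S) (h : S → ℝ)
    (π : S → U) (μ : S → A) (γ : ℝ) (h0 : 0 < γ) (h1 : γ < 1) (V : S → ℝ)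
    (hV : Tpm γ f h π μ V = V) (M : ℝ) (hM : ∀ x, h x ≤ M) (t : ℕ) :
    ∀ x, V x ≤ (1 - γ ^ t) * M + γ ^ t * h (traj f π μ x t) := by
  induction t with
  | zero =>
    intro x
    have e := congrFun hV x
    unfold Tpm at e
    have := mul_le_mul_of_nonneg_left (min_le_left (h x) (V (f x (π x) (μ x)))) h0.le
    simp only [traj, pow_zero]
    linarith
  | succ n ih =>
    intro x
    have e := congrFun hV x
    unfold Tpm at e
    have a1 := mul_le_mul_of_nonneg_left (min_le_right (h x) (V (f x (π x) (μ x)))) h0.le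
    have a2 := mul_le_mul_of_nonneg_left (ih (f x (π x) (μ x))) h0.le
    rw [aux_traj] at a2
    have a3 := mul_le_mul_of_nonneg_left (hM x) (sub_pos.2 h1).le
    rw [pow_succ]
    nlinarith

theorem discounted_approximation_joint {S U A : Type*} [Fintype S] [Nonempty S] [Fintype U] [Nonempty U] [Fintype A] [Nonempty A]
    (f : S → U → A → S) (h : S → ℝ)
    (π : S → U) (μ : S → A) :
    (∀ γ ∈ Set.Ioo (0 : ℝ) 1, ∃! W : S → ℝ, Tpm γ f h π μ W = W) ∧
    (∀ Vγ : ℝ → S → ℝ, (∀ γ ∈ Set.Ioo (0 : ℝ) 1, Tpm γ f h π μ (Vγ γ) = Vγ γ) →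
      ∀ x : S, Filter.Tendsto (fun γ => Vγ γ x) (nhdsWithin 1 (Set.Ioo (0 : ℝ) 1))
        (nhds (Vpm f h π μ x))) := by
  constructor
  · rintro γ ⟨h0, h1⟩
    have hc := aux_contract f h π μ γ h0 h1
    exact ⟨_, hc.fixedPoint_isFixedPt, fun W hW => hc.fixedPoint_unique hW⟩
  · intro V hV x
    obtain ⟨t, ht⟩ := (aux_attain f h π μ x).2
    obtain ⟨z, hz⟩ := Finite.exists_max h
    have hlim : Filter.Tendsto
        (fun γ : ℝ => (1 - γ ^ t) * h z + γ ^ t * h (traj f π μ x t))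
        (nhdsWithin 1 (Set.Ioo (0 : ℝ) 1)) (nhds (Vpm f h π μ x)) := by
      have hcont : Continuous
          (fun γ : ℝ => (1 - γ ^ t) * h z + γ ^ t * h (traj f π μ x t)) := by fun_prop
      have := hcont.tendsto 1
      simp only [one_pow, sub_self, zero_mul, zero_add, one_mul, ← ht] at this
      rw [ht] at this ⊢
      exact this.mono_left nhdsWithin_le_nhds
    refine tendsto_of_tendsto_of_tendsto_of_le_of_le' tendsto_const_nhds hlim ?_ ?_
    · filter_upwards [self_mem_nhdsWithin] with γ hγ
      exact aux_lower f h π μ γ hγ.1 hγ.2 _ (hV γ hγ) x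
    · filter_upwards [self_mem_nhdsWithin] with γ hγ
      exact aux_upper f h π μ γ hγ.1 hγ.2 _ (hV γ hγ) _ hz t x
end

section
/- Approximation by the discounted fixed point, protagonist case (Proposition 1 for T^π): fix a feedback policy π : S → U. For every γ ∈ (0,1), the operator T^π (with discount γ) has a unique fixed point V_γ : S → ℝ, and for every x ∈ S, V_γ(x) tends to V^π(x) as γ tends to 1 from within (0,1). -/
theorem Tp_mono_aux {S U A : Type*} [Fintype A] [Nonempty A]
    (f : S → U → A → S) (h : S → ℝ) (π : S → U) (γ : ℝ) (hγ : γ ∈ Set.Ioo (0 : ℝ) 1)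
    (V W : S → ℝ) (d : ℝ) (hd : 0 ≤ d) (hVW : ∀ y, W y ≤ V y + d) (x : S) :
    Tp γ f h π W x ≤ Tp γ f h π V x + γ * d := by
  have h1 : (⨅ a : A, W (f x (π x) a)) ≤ (⨅ a : A, V (f x (π x) a)) + d := by
    obtain ⟨a, ha⟩ := exists_eq_ciInf_of_finite (f := fun a : A => V (f x (π x) a))
    rw [← ha]
    exact (ciInf_le (Set.finite_range _).bddBelow a).trans (hVW _)
  have h2 : min (h x) (⨅ a : A, W (f x (π x) a))
      ≤ min (h x) (⨅ a : A, V (f x (π x) a)) + d := by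
    rw [← min_add_add_right]
    exact min_le_min (by linarith) h1
  have := mul_le_mul_of_nonneg_left h2 hγ.1.le
  unfold Tp
  linarith

theorem Tp_contr_aux {S U A : Type*} [Fintype S] [Fintype A] [Nonempty A]
    (f : S → U → A → S) (h : S → ℝ) (π : S → U) (γ : ℝ) (hγ : γ ∈ Set.Ioo (0 : ℝ) 1) :
    ContractingWith (⟨γ, hγ.1.le⟩ : NNReal) (Tp γ f h π) := by
  refine ⟨?_, ?_⟩
  · exact NNReal.coe_lt_coe.1 hγ.2
  · refine LipschitzWith.of_dist_le_mul fun V W => ?_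
    change _ ≤ γ * dist V W
    rw [dist_pi_le_iff (mul_nonneg hγ.1.le dist_nonneg)]
    intro x
    have key : ∀ y, |V y - W y| ≤ dist V W := fun y => by
      rw [← Real.dist_eq]; exact dist_le_pi_dist V W y
    have h1 := Tp_mono_aux f h π γ hγ V W (dist V W) dist_nonneg
      (fun y => by have := (abs_le.1 (key y)).1; linarith) x
    have h2 := Tp_mono_aux f h π γ hγ W V (dist V W) dist_nonneg
      (fun y => by have := (abs_le.1 (key y)).2; linarith) x
    rw [Real.dist_eq, abs_le]
    constructor <;> linarith

theorem lower_aux {S U A : Type*} [Fintype S] [Fintype A] [Nonempty A]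
    (f : S → U → A → S) (h : S → ℝ) (π : S → U) (γ : ℝ) (hγ : γ ∈ Set.Ioo (0 : ℝ) 1)
    (V : S → ℝ) (hV : Tp γ f h π V = V) (x : S) : Vp f h π x ≤ V x := by
  have hg : ∀ y, ∃ a : A, V (f y (π y) a) = ⨅ a : A, V (f y (π y) a) := fun y =>
    exists_eq_ciInf_of_finite (f := fun a : A => V (f y (π y) a))
  choose μ hμ using hg
  refine (ciInf_le (Set.finite_range _).bddBelow μ).trans ?_
  have hbh : BddBelow (Set.range fun t => h (traj f π μ x t)) :=
    ((Set.finite_range h).subset (by rintro _ ⟨t, rfl⟩; exact ⟨_, rfl⟩)).bddBelow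
  have hbV : BddBelow (Set.range fun t => V (traj f π μ x t)) :=
    ((Set.finite_range V).subset (by rintro _ ⟨t, rfl⟩; exact ⟨_, rfl⟩)).bddBelow
  have hm : ∀ t, Vpm f h π μ x ≤ h (traj f π μ x t) := fun t => ciInf_le hbh t
  have hc : ∀ t, (⨅ t, V (traj f π μ x t)) ≤ V (traj f π μ x t) := fun t => ciInf_le hbV t
  generalize Vpm f h π μ x = m at hm ⊢
  have hstep : ∀ t, (1 - γ) * m + γ * min m (⨅ t, V (traj f π μ x t)) ≤ V (traj f π μ x t) := by
    intro t
    have e := congrFun hV (traj f π μ x t)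
    unfold Tp at e
    rw [← hμ] at e
    rw [← e]
    have h1 := mul_le_mul_of_nonneg_left (min_le_min (hm t) (hc (t + 1))) hγ.1.le
    have h2 := mul_le_mul_of_nonneg_left (hm t) (sub_nonneg.2 hγ.2.le)
    exact add_le_add h2 h1
  have h3 := le_ciInf hstep
  have h4 := hc 0
  change _ ≤ V x at h4
  refine le_trans ?_ h4
  by_contra hlt
  push Not at hlt
  rw [min_eq_right hlt.le] at h3
  nlinarith [hγ.1, hγ.2]

theorem upper_aux {S U A : Type*} [Fintype A]
    (f : S → U → A → S) (h : S → ℝ) (π : S → U) (γ : ℝ) (hγ : γ ∈ Set.Ioo (0 : ℝ) 1)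
    (V : S → ℝ) (hV : Tp γ f h π V = V) (M : ℝ) (hM : ∀ y, h y ≤ M) (μ : S → A) (x : S) (t : ℕ) :
    V x ≤ (1 - γ ^ t) * M + γ ^ t * h (traj f π μ x t) := by
  have e : ∀ y, V y = (1 - γ) * h y + γ * min (h y) (⨅ a : A, V (f y (π y) a)) := fun y =>
    (congrFun hV y).symm
  have hh : ∀ y, V y ≤ h y := fun y => by
    have := mul_le_mul_of_nonneg_left (min_le_left (h y) (⨅ a : A, V (f y (π y) a))) hγ.1.le
    have := e y
    linarith
  have hs : ∀ y, V y ≤ (1 - γ) * M + γ * V (f y (π y) (μ y)) := fun y => by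
    have h1 : min (h y) (⨅ a : A, V (f y (π y) a)) ≤ V (f y (π y) (μ y)) :=
      (min_le_right _ _).trans
        (ciInf_le (f := fun a : A => V (f y (π y) a)) (Set.finite_range _).bddBelow (μ y))
    have h2 := mul_le_mul_of_nonneg_left h1 hγ.1.le
    have h3 := mul_le_mul_of_nonneg_left (hM y) (sub_nonneg.2 hγ.2.le)
    have := e y
    linarith
  have ind : ∀ t, V x ≤ (1 - γ ^ t) * M + γ ^ t * V (traj f π μ x t) := by
    intro t
    induction t with
    | zero => simp [traj]
    | succ t ih =>
      have h1 := mul_le_mul_of_nonneg_left (hs (traj f π μ x t)) (pow_nonneg hγ.1.le t)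
      have h2 : traj f π μ x (t + 1) = f (traj f π μ x t) (π (traj f π μ x t))
        (μ (traj f π μ x t)) := rfl
      rw [h2]
      refine ih.trans ?_
      rw [pow_succ]
      linarith
  have := mul_le_mul_of_nonneg_left (hh (traj f π μ x t)) (pow_nonneg hγ.1.le t)
  linarith [ind t]

theorem discounted_approximation_protagonist {S U A : Type*} [Fintype S] [Nonempty S] [Fintype U] [Nonempty U] [Fintype A] [Nonempty A]
    (f : S → U → A → S) (h : S → ℝ)
    (π : S → U) :
    (∀ γ ∈ Set.Ioo (0 : ℝ) 1, ∃! W : S → ℝ, Tp γ f h π W = W) ∧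
    (∀ Vγ : ℝ → S → ℝ, (∀ γ ∈ Set.Ioo (0 : ℝ) 1, Tp γ f h π (Vγ γ) = Vγ γ) →
      ∀ x : S, Filter.Tendsto (fun γ => Vγ γ x) (nhdsWithin 1 (Set.Ioo (0 : ℝ) 1))
        (nhds (Vp f h π x))) := by
  refine ⟨fun γ hγ => ?_, fun Vγ hV x => ?_⟩
  · have hc := Tp_contr_aux f h π γ hγ
    exact ⟨hc.fixedPoint, hc.fixedPoint_isFixedPt, fun W hW => hc.fixedPoint_unique hW⟩
  · obtain ⟨μ, hμ⟩ := exists_eq_ciInf_of_finite (f := fun μ : S → A => Vpm f h π μ x)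
    have ht : ∃ t, h (traj f π μ x t) = Vpm f h π μ x :=
      Set.Nonempty.csInf_mem (Set.range_nonempty fun t => h (traj f π μ x t))
        ((Set.finite_range h).subset (by rintro _ ⟨t, rfl⟩; exact ⟨_, rfl⟩))
    obtain ⟨t, ht⟩ := ht
    obtain ⟨M, hM⟩ := (Set.finite_range h).bddAbove
    have hM' : ∀ y, h y ≤ M := fun y => hM ⟨y, rfl⟩
    have hval : Vp f h π x = h (traj f π μ x t) := by rw [ht]; exact hμ.symm
    have hlim : Filter.Tendsto (fun γ : ℝ => (1 - γ ^ t) * M + γ ^ t * h (traj f π μ x t))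
        (nhdsWithin 1 (Set.Ioo (0 : ℝ) 1)) (nhds (Vp f h π x)) := by
      have hcont : Continuous
          (fun γ : ℝ => (1 - γ ^ t) * M + γ ^ t * h (traj f π μ x t)) := by fun_prop
      have := (hcont.tendsto 1).mono_left (nhdsWithin_le_nhds (s := Set.Ioo (0 : ℝ) 1))
      simpa [hval] using this
    refine tendsto_of_tendsto_of_tendsto_of_le_of_le' tendsto_const_nhds hlim ?_ ?_
    · filter_upwards [self_mem_nhdsWithin] with γ hγ
      exact lower_aux f h π γ hγ _ (hV γ hγ) x
    · filter_upwards [self_mem_nhdsWithin] with γ hγ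
      exact upper_aux f h π γ hγ _ (hV γ hγ) M hM' μ x t
end

section
/- Monotone improvement chain of policy iteration (relation (37) in the proof of Theorem 3): suppose V_k : S → ℝ is the fixed point of T^{π_k} (i.e., T^{π_k}(V_k) = V_k), the improved policy π_{k+1} : S → U satisfies T^{π_{k+1}}(V_k) = T(V_k), V_{k+1} : S → ℝ is the fixed point of T^{π_{k+1}}, and V* : S → ℝ is the fixed point of T. Then for every x ∈ S, V_k(x) ≤ (T(V_k))(x) ≤ V_{k+1}(x) ≤ V*(x). -/
theorem aux_inf {A : Type*} [Finite A] [Nonempty A] (p q : A → ℝ) (c : ℝ)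
    (hpq : ∀ a, p a ≤ q a + c) : (⨅ a, p a) ≤ (⨅ a, q a) + c := by
  have h1 : (⨅ a, p a) - c ≤ ⨅ a, q a := by
    refine le_ciInf fun a => ?_
    have := ciInf_le (Set.finite_range p).bddBelow a
    linarith [hpq a]
  linarith

theorem aux_sup {A : Type*} [Finite A] [Nonempty A] (p q : A → ℝ) (c : ℝ)
    (hpq : ∀ a, p a ≤ q a + c) : (⨆ a, p a) ≤ (⨆ a, q a) + c := by
  refine ciSup_le fun a => ?_
  have := le_ciSup (Set.finite_range q).bddAbove a
  linarith [hpq a]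

theorem aux_min {γ : ℝ} (hγ : 0 ≤ γ) (r p q c : ℝ) (hc : 0 ≤ c) (hpq : p ≤ q + c) :
    (1 - γ) * r + γ * min r p ≤ (1 - γ) * r + γ * min r q + γ * c := by
  have h1 : min r p ≤ min r q + c := by
    rcases min_cases r q with h | h <;> linarith [min_le_left r p, min_le_right r p]
  nlinarith [mul_le_mul_of_nonneg_left h1 hγ]

theorem aux_cmp {S : Type*} [Finite S] [Nonempty S] {γ : ℝ} (hγ : γ < 1)
    (T : (S → ℝ) → S → ℝ)
    (hT : ∀ V W : S → ℝ, ∀ c : ℝ, 0 ≤ c → (∀ y, V y ≤ W y + c) → ∀ x, T V x ≤ T W x + γ * c)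
    (V W : S → ℝ) (hV : ∀ x, V x ≤ T V x) (hW : T W = W) (x : S) : V x ≤ W x := by
  obtain ⟨z, hz⟩ := Finite.exists_max fun y => V y - W y
  by_contra hx
  push Not at hx
  have hzx := hz x
  have hc : 0 < V z - W z := by linarith
  have h1 := hT V W (V z - W z) hc.le (fun y => by linarith [hz y]) z
  rw [hW] at h1
  nlinarith [hV z]

theorem policy_iteration_chain {S U A : Type*} [Fintype S] [Nonempty S] [Fintype U] [Nonempty U] [Fintype A] [Nonempty A]
    (f : S → U → A → S) (h : S → ℝ)
    {γ : ℝ} (hγ : γ ∈ Set.Ioo (0 : ℝ) 1)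
    (πk πk1 : S → U) (Vk Vk1 Vst : S → ℝ)
    (hVk : Tp γ f h πk Vk = Vk)
    (himp : Tp γ f h πk1 Vk = Topt γ f h Vk)
    (hVk1 : Tp γ f h πk1 Vk1 = Vk1)
    (hVst : Topt γ f h Vst = Vst) :
    ∀ x : S, Vk x ≤ Topt γ f h Vk x ∧ Topt γ f h Vk x ≤ Vk1 x ∧ Vk1 x ≤ Vst x := by
  have hγ0 := hγ.1.le
  have hTp : ∀ π : S → U, ∀ V W : S → ℝ, ∀ c : ℝ, 0 ≤ c → (∀ y, V y ≤ W y + c) →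
      ∀ x, Tp γ f h π V x ≤ Tp γ f h π W x + γ * c := fun π V W c hc hVW x =>
    aux_min hγ0 _ _ _ _ hc (aux_inf _ _ _ fun a => hVW _)
  have hTo : ∀ V W : S → ℝ, ∀ c : ℝ, 0 ≤ c → (∀ y, V y ≤ W y + c) →
      ∀ x, Topt γ f h V x ≤ Topt γ f h W x + γ * c := fun V W c hc hVW x =>
    aux_min hγ0 _ _ _ _ hc (aux_sup _ _ _ fun u => aux_inf _ _ _ fun a => hVW _)
  have hle : ∀ (π : S → U) (V : S → ℝ) x, Tp γ f h π V x ≤ Topt γ f h V x := by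
    intro π V x
    have h1 : (⨅ a : A, V (f x (π x) a)) ≤ ⨆ u : U, ⨅ a : A, V (f x u a) :=
      le_ciSup (f := fun u : U => ⨅ a : A, V (f x u a)) (Set.finite_range _).bddAbove (π x)
    have := aux_min hγ0 (h x) _ _ 0 le_rfl (h1.trans_eq (add_zero _).symm)
    simpa [Tp, Topt] using this
  have hk : ∀ x, Vk x ≤ Topt γ f h Vk x := fun x => by
    have := hle πk Vk x
    rwa [hVk] at this
  have hkk : ∀ x, Vk x ≤ Vk1 x :=
    aux_cmp hγ.2 (Tp γ f h πk1) (hTp πk1) Vk Vk1 (fun x => by rw [himp]; exact hk x) hVk1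
  intro x
  refine ⟨hk x, ?_, ?_⟩
  · have := hTp πk1 Vk Vk1 0 le_rfl (fun y => by simpa using hkk y) x
    rw [himp, hVk1] at this
    simpa using this
  · refine aux_cmp hγ.2 (Topt γ f h) hTo Vk1 Vst (fun x => ?_) hVst x
    have := hle πk1 Vk1 x
    rwa [hVk1] at this
end

section
/- Monotone convergence of policy iteration for robust invariant sets (Theorem 3): let (π_k)_{k∈ℕ} be a sequence of feedback policies S → U and (V_k)_{k∈ℕ} a sequence of functions S → ℝ such that for every k, T^{π_k}(V_k) = V_k (policy evaluation) and T^{π_{k+1}}(V_k) = T(V_k) (greedy policy improvement). Then the sequence (V_k) is pointwise nondecreasing in k, and for every x ∈ S, V_k(x) converges as k → ∞ to V*(x), where V* is the unique fixed point of T. -/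
theorem aux_Tp_shift {S U A : Type*} [Fintype A] [Nonempty A]
    {γ : ℝ} (hγ : 0 < γ) (f : S → U → A → S) (h : S → ℝ) (π : S → U)
    (V W : S → ℝ) (c : ℝ) (hc : 0 ≤ c) (hVW : ∀ x, V x ≤ W x + c) (x : S) :
    Tp γ f h π V x ≤ Tp γ f h π W x + γ * c := by
  unfold Tp
  have h1 : (⨅ a : A, V (f x (π x) a)) ≤ (⨅ a : A, W (f x (π x) a)) + c := by
    rw [← sub_le_iff_le_add]
    refine le_ciInf fun a => ?_
    have := ciInf_le (Set.finite_range fun a : A => V (f x (π x) a)).bddBelow a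
    have := hVW (f x (π x) a)
    linarith
  have h2 : min (h x) (⨅ a : A, V (f x (π x) a)) ≤
      min (h x) (⨅ a : A, W (f x (π x) a)) + c := by
    rw [← min_add_add_right]
    exact min_le_min (by linarith) h1
  have := mul_le_mul_of_nonneg_left h2 hγ.le
  linarith

theorem aux_Tp_le {S U A : Type*} [Fintype U]
    {γ : ℝ} (hγ : 0 < γ) (f : S → U → A → S) (h : S → ℝ) (π : S → U)
    (V : S → ℝ) (x : S) : Tp γ f h π V x ≤ Topt γ f h V x := by
  unfold Tp Topt
  have h1 := le_ciSup (Set.finite_range fun u : U => ⨅ a : A, V (f x u a)).bddAbove (π x)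
  have := mul_le_mul_of_nonneg_left (min_le_min (le_refl (h x)) h1) hγ.le
  linarith

theorem aux_Topt_shift {S U A : Type*} [Fintype U] [Nonempty U] [Fintype A] [Nonempty A]
    {γ : ℝ} (hγ : 0 < γ) (f : S → U → A → S) (h : S → ℝ)
    (V W : S → ℝ) (c : ℝ) (hc : 0 ≤ c) (hVW : ∀ x, V x ≤ W x + c) (x : S) :
    Topt γ f h V x ≤ Topt γ f h W x + γ * c := by
  obtain ⟨u, hu⟩ := exists_eq_ciSup_of_finite (f := fun u : U => ⨅ a : A, V (f x u a))
  have h1 : Topt γ f h V x = Tp γ f h (fun _ => u) V x := by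
    unfold Topt Tp
    rw [← hu]
  rw [h1]
  have h2 := aux_Tp_shift hγ f h (fun _ => u) V W c hc hVW x
  have h3 := aux_Tp_le hγ f h (fun _ => u) W x
  linarith

theorem aux_compare {S : Type*} [Fintype S] [Nonempty S] {γ : ℝ} (hγ : γ < 1)
    (T : (S → ℝ) → S → ℝ)
    (hT : ∀ V W : S → ℝ, ∀ c : ℝ, 0 ≤ c → (∀ x, V x ≤ W x + c) →
      ∀ x, T V x ≤ T W x + γ * c)
    (V W : S → ℝ) (hV : ∀ x, V x ≤ T V x) (hW : T W = W) (x : S) : V x ≤ W x := by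
  obtain ⟨y, hy⟩ := Finite.exists_max fun x => V x - W x
  by_contra hx
  have hpos : 0 < V y - W y := by have := hy x; linarith
  have h1 := hT V W (V y - W y) hpos.le (fun z => by have := hy z; linarith) y
  rw [hW] at h1
  have := hV y
  nlinarith

theorem policy_iteration_monotone_convergence {S U A : Type*} [Fintype S] [Nonempty S] [Fintype U] [Nonempty U] [Fintype A] [Nonempty A]
    (f : S → U → A → S) (h : S → ℝ)
    {γ : ℝ} (hγ : γ ∈ Set.Ioo (0 : ℝ) 1)
    (πseq : ℕ → S → U) (Vseq : ℕ → S → ℝ)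
    (heval : ∀ k, Tp γ f h (πseq k) (Vseq k) = Vseq k)
    (himp : ∀ k, Tp γ f h (πseq (k + 1)) (Vseq k) = Topt γ f h (Vseq k))
    (Vst : S → ℝ) (hfix : Topt γ f h Vst = Vst)
    (huniq : ∀ W : S → ℝ, Topt γ f h W = W → W = Vst) :
    (∀ x : S, Monotone fun k => Vseq k x) ∧
    (∀ x : S, Filter.Tendsto (fun k => Vseq k x) Filter.atTop (nhds (Vst x))) := by
  obtain ⟨h0, h1⟩ := hγ
  have hle : ∀ k x, Vseq k x ≤ Topt γ f h (Vseq k) x := fun k x => by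
    have := aux_Tp_le h0 f h (πseq k) (Vseq k) x
    rwa [heval k] at this
  have hstep : ∀ k x, Vseq k x ≤ Vseq (k + 1) x := fun k x =>
    aux_compare h1 (Tp γ f h (πseq (k + 1))) (aux_Tp_shift h0 f h (πseq (k + 1)))
      (Vseq k) (Vseq (k + 1)) (fun z => by rw [himp k]; exact hle k z) (heval (k + 1)) x
  have hub : ∀ k x, Vseq k x ≤ Vst x := fun k x =>
    aux_compare h1 (Topt γ f h) (aux_Topt_shift h0 f h) (Vseq k) Vst (hle k) hfix x
  have hnext : ∀ k x, Topt γ f h (Vseq k) x ≤ Vseq (k + 1) x := fun k x => by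
    have := aux_Tp_shift h0 f h (πseq (k + 1)) (Vseq k) (Vseq (k + 1)) 0 le_rfl
      (fun z => by simpa using hstep k z) x
    rw [heval (k + 1), himp k] at this
    linarith
  obtain ⟨y, hy⟩ := Finite.exists_max fun x => Vst x - Vseq 0 x
  have hc : 0 ≤ Vst y - Vseq 0 y := sub_nonneg.2 (hub 0 y)
  have hlb : ∀ k x, Vst x ≤ Vseq k x + γ ^ k * (Vst y - Vseq 0 y) := by
    intro k
    induction k with
    | zero => intro x; have := hy x; simp only [pow_zero]; linarith
    | succ k ih =>
      intro x
      have h2 := aux_Topt_shift h0 f h Vst (Vseq k) _ (mul_nonneg (pow_nonneg h0.le k) hc) ih x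
      rw [hfix] at h2
      have h3 := hnext k x
      rw [pow_succ']
      linarith
  refine ⟨fun x => monotone_nat_of_le_succ fun k => hstep k x, fun x => ?_⟩
  have hlim : Filter.Tendsto (fun k : ℕ => Vst x - γ ^ k * (Vst y - Vseq 0 y))
      Filter.atTop (nhds (Vst x)) := by
    have := ((tendsto_pow_atTop_nhds_zero_of_lt_one h0.le h1).mul_const
      (Vst y - Vseq 0 y)).const_sub (Vst x)
    simpa using this
  exact tendsto_of_tendsto_of_tendsto_of_le_of_le hlim tendsto_const_nhds
    (fun k => by have := hlb k x; linarith) (fun k => hub k x)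
end
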